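/- (Hardy–Littlewood inequality with constant 1, Mateljević.) For every complex polynomial f(z) = ∑_{n=0}^d a_n z^n one has (∑_{n=0}^d |a_n|²/(n+1))^{1/2} ≤ (1/2π) ∫_0^{2π} |f(e^{iθ})| dθ. -/

import Mathlib

open Finset Real

/-!
Every polynomial `f` factors as `f = u v` on the closed unit disc, with `u`, `v` in the disc algebra
and `|u| = |v|` on the unit circle: such factorizations multiply, and a linear factor either has a
holomorphic square root on the disc or is a Blaschke factor times a function that has one. The
coefficients of `f` are then Cauchy products of those of `u` and `v`. The `n`-th product has
`n + 1` terms, so the Cauchy–Schwarz inequality produces exactly the weight `1 / (n + 1)`, and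
Bessel's inequality bounds the sum by `‖u‖₂² ‖v‖₂²`, where `‖u‖₂² = ‖v‖₂² = ‖f‖₁` on the circle.
-/

theorem norm_sum_range_mul_sq_div_le {A : Type*} [NonUnitalSeminormedRing A] (x y : ℕ → A)
    (n : ℕ) :
    ‖∑ i ∈ range (n + 1), x i * y (n - i)‖ ^ 2 / ((n : ℝ) + 1) ≤
      ∑ i ∈ range (n + 1), ‖x i‖ ^ 2 * ‖y (n - i)‖ ^ 2 := by
  rw [div_le_iff₀' (by positivity)]
  calc ‖∑ i ∈ range (n + 1), x i * y (n - i)‖ ^ 2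
      ≤ (∑ i ∈ range (n + 1), ‖x i‖ * ‖y (n - i)‖) ^ 2 := by
        gcongr
        exact norm_sum_le_of_le _ fun i _ ↦ norm_mul_le _ _
    _ ≤ #(range (n + 1)) * ∑ i ∈ range (n + 1), (‖x i‖ * ‖y (n - i)‖) ^ 2 :=
        sq_sum_le_card_mul_sum_sq
    _ = ((n : ℝ) + 1) * ∑ i ∈ range (n + 1), ‖x i‖ ^ 2 * ‖y (n - i)‖ ^ 2 := by
        simp only [card_range, Nat.cast_add_one, mul_pow]

theorem sum_norm_sum_range_mul_sq_div_le {A : Type*} [NonUnitalSeminormedRing A] (x y : ℕ → A)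
    (N : ℕ) :
    ∑ n ∈ range N, ‖∑ i ∈ range (n + 1), x i * y (n - i)‖ ^ 2 / ((n : ℝ) + 1) ≤
      (∑ n ∈ range N, ‖x n‖ ^ 2) * ∑ n ∈ range N, ‖y n‖ ^ 2 :=
  calc ∑ n ∈ range N, ‖∑ i ∈ range (n + 1), x i * y (n - i)‖ ^ 2 / ((n : ℝ) + 1)
      ≤ ∑ n ∈ range N, ∑ i ∈ range (n + 1), ‖x i‖ ^ 2 * ‖y (n - i)‖ ^ 2 :=
        sum_le_sum fun n _ ↦ norm_sum_range_mul_sq_div_le x y n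
    _ = ∑ i ∈ range N, ∑ j ∈ range (N - i), ‖x i‖ ^ 2 * ‖y j‖ ^ 2 :=
        sum_range_diag_flip N fun i j ↦ ‖x i‖ ^ 2 * ‖y j‖ ^ 2
    _ ≤ ∑ i ∈ range N, ∑ j ∈ range N, ‖x i‖ ^ 2 * ‖y j‖ ^ 2 := by
        gcongr
        exact Nat.sub_le _ _
    _ = (∑ n ∈ range N, ‖x n‖ ^ 2) * ∑ n ∈ range N, ‖y n‖ ^ 2 := (sum_mul_sum ..).symm

section TaylorCoeff

variable {𝕜 : Type*} [NontriviallyNormedField 𝕜]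

/-- The `n`-th Taylor coefficient `f⁽ⁿ⁾(c) / n!` of a function of one variable; it is meaningful
where `f` is `n` times differentiable and `n!` is nonzero in `𝕜`. -/
noncomputable def taylorCoeff (f : 𝕜 → 𝕜) (c : 𝕜) (n : ℕ) : 𝕜 :=
  iteratedDeriv n f c / n.factorial

theorem taylorCoeff_congr {f g : 𝕜 → 𝕜} {c : 𝕜} (h : f =ᶠ[nhds c] g) (n : ℕ) :
    taylorCoeff f c n = taylorCoeff g c n := by
  rw [taylorCoeff, h.iteratedDeriv_eq, taylorCoeff]

theorem taylorCoeff_mul [CharZero 𝕜] {f g : 𝕜 → 𝕜} {c : 𝕜} {n : ℕ} (hf : ContDiffAt 𝕜 n f c)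
    (hg : ContDiffAt 𝕜 n g c) :
    taylorCoeff (f * g) c n =
      ∑ i ∈ range (n + 1), taylorCoeff f c i * taylorCoeff g c (n - i) := by
  rw [taylorCoeff, iteratedDeriv_mul hf hg, sum_div]
  refine sum_congr rfl fun i hi ↦ ?_
  have hfac (k : ℕ) : (k.factorial : 𝕜) ≠ 0 := Nat.cast_ne_zero.mpr k.factorial_ne_zero
  have := hfac n
  rw [Nat.cast_choose 𝕜 (mem_range_succ_iff.mp hi), taylorCoeff, taylorCoeff]
  field_simp

theorem iteratedDeriv_polynomial_eval (p : Polynomial 𝕜) (n : ℕ) (c : 𝕜) :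
    iteratedDeriv n (fun z ↦ p.eval z) c = (Polynomial.derivative^[n] p).eval c := by
  induction n generalizing c with
  | zero => rw [iteratedDeriv_zero, Function.iterate_zero_apply]
  | succ n ih =>
    rw [iteratedDeriv_succ, funext ih, Polynomial.deriv, Function.iterate_succ_apply']

theorem taylorCoeff_polynomial_eval [CharZero 𝕜] (p : Polynomial 𝕜) (c : 𝕜) (n : ℕ) :
    taylorCoeff (fun z ↦ p.eval z) c n = (p.taylor c).coeff n := by
  have hfac : (n.factorial : 𝕜) ≠ 0 := Nat.cast_ne_zero.mpr n.factorial_ne_zero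
  rw [taylorCoeff, iteratedDeriv_polynomial_eval, Polynomial.taylor_coeff, div_eq_iff hfac,
    ← Polynomial.factorial_smul_hasseDeriv, LinearMap.smul_apply, Polynomial.eval_smul,
    nsmul_eq_mul, mul_comm]

end TaylorCoeff

section DiscAlgebra

open Metric

variable {u : ℂ → ℂ} {c : ℂ} {R : ℝ}

theorem taylorCoeff_eq_circleAverage (hR : 0 < R) (hu : DiffContOnCl ℂ u (ball c R)) (n : ℕ) :
    taylorCoeff u c n = circleAverage (fun z ↦ ((z - c) ^ n)⁻¹ * u z) c R := by
  have hcauchy := hu.circleIntegral_one_div_sub_center_pow_smul hR n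
  rw [circleAverage_eq_circleIntegral hR.ne']
  simp only [smul_eq_mul, ← mul_assoc, ← mul_inv, ← pow_succ', one_div] at hcauchy ⊢
  rw [hcauchy, taylorCoeff]
  have := Complex.two_pi_I_ne_zero
  field_simp

theorem fourierCoeffOn_comp_circleMap (hR : 0 < R) (hu : DiffContOnCl ℂ u (ball c R)) (n : ℕ) :
    fourierCoeffOn two_pi_pos (fun θ ↦ u (circleMap c R θ)) n = R ^ n * taylorCoeff u c n := by
  rw [taylorCoeff_eq_circleAverage hR hu, circleAverage_def, fourierCoeffOn_eq_integral,
    mul_smul_comm, ← intervalIntegral.integral_const_mul, one_div, sub_zero]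
  congr 2 with θ
  have hfourier : fourier (-n : ℤ) (θ : AddCircle (2 * π)) =
      (Complex.exp (θ * Complex.I) ^ n)⁻¹ := by
    rw [fourier_coe_apply, ← Complex.exp_nat_mul, ← Complex.exp_neg]
    congr 1
    push_cast
    field_simp
  have hR' : (R : ℂ) ^ n ≠ 0 := pow_ne_zero n (Complex.ofReal_ne_zero.mpr hR.ne')
  rw [hfourier, smul_eq_mul, circleMap_sub_center, circleMap_zero, mul_pow, mul_inv, mul_assoc,
    mul_inv_cancel_left₀ hR']

theorem sum_norm_taylorCoeff_sq_le_circleAverage (hR : 0 < R) (hu : DiffContOnCl ℂ u (ball c R))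
    (s : Finset ℕ) :
    ∑ n ∈ s, (R ^ n * ‖taylorCoeff u c n‖) ^ 2 ≤ circleAverage (fun z ↦ ‖u z‖ ^ 2) c R := by
  have hcont : Continuous fun θ ↦ u (circleMap c R θ) :=
    hu.continuousOn_ball.comp_continuous (continuous_circleMap c R)
      (circleMap_mem_closedBall c hR.le)
  have hL2 : MeasureTheory.MemLp (fun θ ↦ u (circleMap c R θ)) 2
      (MeasureTheory.volume.restrict (Set.Ioc 0 (2 * π))) :=
    (MeasureTheory.memLp_two_iff_integrable_sq_norm hcont.aestronglyMeasurable).mpr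
      (hcont.norm.pow 2).integrableOn_Ioc
  have hbessel := sum_le_hasSum (s.map Nat.castEmbedding) (fun _ _ ↦ by positivity)
    (hasSum_sq_fourierCoeffOn two_pi_pos hL2)
  simpa [fourierCoeffOn_comp_circleMap hR hu, circleAverage_def, abs_of_pos hR] using hbessel

end DiscAlgebra

theorem diffContOnCl_cpow_const {E : Type*} [NormedAddCommGroup E] [NormedSpace ℂ E] {f : E → ℂ}
    {s : Set E} {w : ℂ} (hf : DiffContOnCl ℂ f s) (hre : ∀ z ∈ s, 0 < (f z).re) (hw : 0 < w.re) :
    DiffContOnCl ℂ (fun z ↦ f z ^ w) s where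
  differentiableOn z hz :=
    (hf.differentiableOn z hz).cpow_const (.inl (hre z hz))
  continuousOn z hz := by
    have hmaps : Set.MapsTo f (closure s) {ζ | 0 ≤ ζ.re} := by
      rw [← (isClosed_le continuous_const Complex.continuous_re).closure_eq]
      exact Set.MapsTo.closure_of_continuousOn (fun z hz ↦ (hre z hz).le) hf.continuousOn
    exact (Complex.continuousAt_cpow_const_of_re_pos (.inl (hmaps hz)) hw).comp_continuousWithinAt
      (hf.continuousOn z hz)

section Blaschke

open Metric ComplexConjugate

variable {α z : ℂ}

/-- The Blaschke factor of the unit disc with zero `α`, used to divide out the zeros of a polynomial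
inside the disc. -/
noncomputable def blaschkeFactor (α z : ℂ) : ℂ := (z - α) / (1 - conj α * z)

theorem one_sub_conj_mul_ne_zero (hα : ‖α‖ < 1) (hz : ‖z‖ ≤ 1) : 1 - conj α * z ≠ 0 := by
  have hlt : ‖conj α * z‖ < 1 := by
    rw [norm_mul, RCLike.norm_conj]
    exact mul_lt_one_of_nonneg_of_lt_one_left (norm_nonneg α) hα hz
  exact sub_ne_zero.mpr fun h ↦ hlt.ne (by rw [← h, norm_one])

theorem norm_one_sub_conj_mul (α : ℂ) (hz : ‖z‖ = 1) : ‖1 - conj α * z‖ = ‖z - α‖ := by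
  have hfactor : 1 - conj α * z = conj (z - α) * z := by
    rw [map_sub, sub_mul, Complex.conj_mul', hz, Complex.ofReal_one, one_pow]
  rw [hfactor, norm_mul, RCLike.norm_conj, hz, mul_one]

theorem norm_blaschkeFactor_eq_one (hα : ‖α‖ < 1) (hz : ‖z‖ = 1) :
    ‖blaschkeFactor α z‖ = 1 := by
  rw [blaschkeFactor, norm_div, ← norm_one_sub_conj_mul α hz]
  exact div_self (norm_ne_zero_iff.mpr (one_sub_conj_mul_ne_zero hα hz.le))

theorem diffContOnCl_blaschkeFactor (hα : ‖α‖ < 1) :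
    DiffContOnCl ℂ (blaschkeFactor α) (ball 0 1) := by
  refine DifferentiableOn.diffContOnCl fun z hz ↦ ?_
  rw [closure_ball _ one_ne_zero, mem_closedBall_zero_iff] at hz
  have hden : DifferentiableWithinAt ℂ (fun z ↦ 1 - conj α * z) (closure (ball 0 1)) z := by
    fun_prop
  exact (differentiableWithinAt_id.sub_const α).div hden (one_sub_conj_mul_ne_zero hα hz)

end Blaschke

/-- `f` is, on the closed unit disc, a product `u v` of two functions of the disc algebra with
`|u| = |v|` on the unit circle. Since `|u|² = |v|² = |f|` there, this turns the `L¹` norm of `f`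
into the squared `L²` norms of `u` and `v`. The values of `f` outside the disc are irrelevant. -/
def HasBalancedFactorization (f : ℂ → ℂ) : Prop :=
  ∃ u v : ℂ → ℂ, DiffContOnCl ℂ u (Metric.ball 0 1) ∧ DiffContOnCl ℂ v (Metric.ball 0 1) ∧
    Set.EqOn f (u * v) (Metric.closedBall 0 1) ∧ ∀ z ∈ Metric.sphere (0 : ℂ) 1, ‖u z‖ = ‖v z‖

namespace HasBalancedFactorization

open Metric

variable {f g : ℂ → ℂ}

theorem congr (hf : HasBalancedFactorization f) (h : Set.EqOn g f (closedBall 0 1)) :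
    HasBalancedFactorization g :=
  let ⟨u, v, hu, hv, huv, hnorm⟩ := hf
  ⟨u, v, hu, hv, h.trans huv, hnorm⟩

theorem mul (hf : HasBalancedFactorization f) (hg : HasBalancedFactorization g) :
    HasBalancedFactorization (f * g) := by
  obtain ⟨u₁, v₁, hu₁, hv₁, hf, hnorm₁⟩ := hf
  obtain ⟨u₂, v₂, hu₂, hv₂, hg, hnorm₂⟩ := hg
  refine ⟨u₁ * u₂, v₁ * v₂, hu₁.smul hu₂, hv₁.smul hv₂, fun z hz ↦ ?_, fun z hz ↦ ?_⟩
  · simp only [Pi.mul_apply, hf hz, hg hz, mul_mul_mul_comm]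
  · simp only [Pi.mul_apply, norm_mul, hnorm₁ z hz, hnorm₂ z hz]

theorem of_sq {u : ℂ → ℂ} (hu : DiffContOnCl ℂ u (ball 0 1)) (h : ∀ z, f z = u z ^ 2) :
    HasBalancedFactorization f :=
  ⟨u, u, hu, hu, fun z _ ↦ (h z).trans (sq _), fun _ _ ↦ rfl⟩

theorem of_norm_eq_one (hf : DiffContOnCl ℂ f (ball 0 1)) (h : ∀ z ∈ sphere 0 1, ‖f z‖ = 1) :
    HasBalancedFactorization f :=
  ⟨f, 1, hf, diffContOnCl_const, fun _ _ ↦ (mul_one _).symm,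
    fun z hz ↦ (h z hz).trans norm_one.symm⟩

theorem of_re_pos (hf : DiffContOnCl ℂ f (ball 0 1)) (hre : ∀ z ∈ ball 0 1, 0 < (f z).re) :
    HasBalancedFactorization f :=
  of_sq (diffContOnCl_cpow_const (w := 2⁻¹) hf hre (by norm_num))
    fun _ ↦ (Complex.cpow_ofNat_inv_pow _ 2).symm

theorem const (c : ℂ) : HasBalancedFactorization fun _ ↦ c :=
  of_sq diffContOnCl_const fun _ ↦ (Complex.cpow_ofNat_inv_pow c 2).symm

theorem one_sub_const_mul {b : ℂ} (hb : ‖b‖ ≤ 1) : HasBalancedFactorization fun z ↦ 1 - b * z := by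
  refine of_re_pos (Differentiable.diffContOnCl (by fun_prop)) fun z hz ↦ ?_
  have hbz : ‖b * z‖ < 1 := by
    rw [norm_mul]
    exact mul_lt_one_of_nonneg_of_lt_one_right hb (norm_nonneg z) (mem_ball_zero_iff.mp hz)
  rw [Complex.sub_re, Complex.one_re, sub_pos]
  exact (Complex.re_le_norm _).trans_lt hbz

theorem sub_const (α : ℂ) : HasBalancedFactorization fun z ↦ z - α := by
  rcases le_or_gt 1 ‖α‖ with hα | hα
  · have hα₀ : α ≠ 0 := norm_pos_iff.mp (one_pos.trans_le hα)
    have hinv : ‖α⁻¹‖ ≤ 1 := (norm_inv α).trans_le (inv_le_one_of_one_le₀ hα)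
    refine ((const (-α)).mul (one_sub_const_mul hinv)).congr fun z _ ↦ ?_
    simp only [Pi.mul_apply]
    field_simp
    ring
  · have hblaschke : HasBalancedFactorization (blaschkeFactor α) :=
      of_norm_eq_one (diffContOnCl_blaschkeFactor hα) fun z hz ↦
        norm_blaschkeFactor_eq_one hα (mem_sphere_zero_iff_norm.mp hz)
    have hden := one_sub_const_mul ((RCLike.norm_conj α).trans_le hα.le)
    refine (hblaschke.mul hden).congr fun z hz ↦ ?_
    have hne := one_sub_conj_mul_ne_zero hα (mem_closedBall_zero_iff.mp hz)
    exact (div_mul_cancel₀ _ hne).symm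

theorem multiset_prod_sub (s : Multiset ℂ) :
    HasBalancedFactorization fun z ↦ (s.map (z - ·)).prod := by
  induction s using Multiset.induction_on with
  | empty => simpa only [Multiset.map_zero, Multiset.prod_zero] using const 1
  | cons α s ih =>
    simp only [Multiset.map_cons, Multiset.prod_cons]
    exact (sub_const α).mul ih

theorem polynomial_eval (p : Polynomial ℂ) : HasBalancedFactorization fun z ↦ p.eval z :=
  ((const p.leadingCoeff).mul (multiset_prod_sub p.roots)).congr fun z _ ↦
    (IsAlgClosed.splits p).eval_eq_prod_roots z

theorem sum_norm_taylorCoeff_sq_div_le (hf : HasBalancedFactorization f) (N : ℕ) :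
    ∑ n ∈ range N, ‖taylorCoeff f 0 n‖ ^ 2 / ((n : ℝ) + 1) ≤
      circleAverage (fun z ↦ ‖f z‖) 0 1 ^ 2 := by
  obtain ⟨u, v, hu, hv, huv, hnorm⟩ := hf
  have hball : ball (0 : ℂ) 1 ∈ nhds 0 := ball_mem_nhds 0 one_pos
  have hcoeff (n : ℕ) : taylorCoeff f 0 n =
      ∑ i ∈ range (n + 1), taylorCoeff u 0 i * taylorCoeff v 0 (n - i) := by
    rw [taylorCoeff_congr ((huv.mono ball_subset_closedBall).eventuallyEq_of_mem hball),
      taylorCoeff_mul (hu.differentiableOn.analyticAt hball).contDiffAt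
        (hv.differentiableOn.analyticAt hball).contDiffAt]
  have hbessel {w : ℂ → ℂ} (hw : DiffContOnCl ℂ w (ball 0 1))
      (hwf : ∀ z ∈ sphere 0 1, ‖w z‖ ^ 2 = ‖f z‖) :
      ∑ n ∈ range N, ‖taylorCoeff w 0 n‖ ^ 2 ≤ circleAverage (fun z ↦ ‖f z‖) 0 1 := by
    rw [← circleAverage_congr_sphere (f₁ := fun z ↦ ‖w z‖ ^ 2) (by rwa [abs_one])]
    simpa using sum_norm_taylorCoeff_sq_le_circleAverage one_pos hw (range N)
  have hf_norm {z : ℂ} (hz : z ∈ sphere 0 1) : ‖f z‖ = ‖u z‖ * ‖v z‖ := by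
    rw [huv (sphere_subset_closedBall hz), Pi.mul_apply, norm_mul]
  calc ∑ n ∈ range N, ‖taylorCoeff f 0 n‖ ^ 2 / ((n : ℝ) + 1)
      ≤ (∑ n ∈ range N, ‖taylorCoeff u 0 n‖ ^ 2) * ∑ n ∈ range N, ‖taylorCoeff v 0 n‖ ^ 2 := by
        simp only [hcoeff]
        exact sum_norm_sum_range_mul_sq_div_le _ _ N
    _ ≤ circleAverage (fun z ↦ ‖f z‖) 0 1 * circleAverage (fun z ↦ ‖f z‖) 0 1 := by
        gcongr
        · exact circleAverage_nonneg_of_nonneg fun _ _ ↦ norm_nonneg _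
        · exact hbessel hu fun z hz ↦ by rw [hf_norm hz, ← hnorm z hz, sq]
        · exact hbessel hv fun z hz ↦ by rw [hf_norm hz, hnorm z hz, sq]
    _ = circleAverage (fun z ↦ ‖f z‖) 0 1 ^ 2 := (sq _).symm

end HasBalancedFactorization

theorem sum_norm_coeff_sq_div_le_circleAverage_sq (p : Polynomial ℂ) (N : ℕ) :
    ∑ n ∈ range N, ‖p.coeff n‖ ^ 2 / ((n : ℝ) + 1) ≤
      circleAverage (fun z ↦ ‖p.eval z‖) 0 1 ^ 2 := by
  simpa only [taylorCoeff_polynomial_eval, Polynomial.taylor_zero] using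
    (HasBalancedFactorization.polynomial_eval p).sum_norm_taylorCoeff_sq_div_le N

/-- **Hardy–Littlewood inequality with constant 1 (Mateljević).**
For every complex polynomial `f(z) = ∑_{n=0}^d a_n z^n`,
`(∑_{n=0}^d |a_n|²/(n+1))^{1/2} ≤ (1/2π) ∫_0^{2π} |f(e^{iθ})| dθ`. -/
theorem hardy_littlewood_mateljevic (d : ℕ) (a : ℕ → ℂ) :
    Real.sqrt (∑ n ∈ Finset.range (d + 1), ‖a n‖ ^ 2 / ((n : ℝ) + 1))
      ≤ (1 / (2 * π)) *
        ∫ θ in (0 : ℝ)..(2 * π),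
          ‖∑ n ∈ Finset.range (d + 1),
            a n * Complex.exp (Complex.I * θ) ^ n‖ := by
  let p : Polynomial ℂ := ∑ n ∈ range (d + 1), Polynomial.monomial n (a n)
  have hcoeff : ∀ n ∈ range (d + 1), p.coeff n = a n := fun n hn ↦ by
    rw [Polynomial.finsetSum_coeff]
    simp only [Polynomial.coeff_monomial, sum_ite_eq', if_pos hn]
  have hmean : circleAverage (fun z ↦ ‖p.eval z‖) 0 1 = (1 / (2 * π)) *
      ∫ θ in (0 : ℝ)..(2 * π), ‖∑ n ∈ range (d + 1), a n * Complex.exp (Complex.I * θ) ^ n‖ := by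
    simp only [p, circleAverage_def, smul_eq_mul, one_div, Polynomial.eval_finsetSum,
      Polynomial.eval_monomial, circleMap_zero, Complex.ofReal_one, one_mul, mul_comm Complex.I]
  rw [← hmean]
  refine Real.sqrt_le_iff.mpr ⟨circleAverage_nonneg_of_nonneg fun _ _ ↦ norm_nonneg _, ?_⟩
  calc ∑ n ∈ range (d + 1), ‖a n‖ ^ 2 / ((n : ℝ) + 1)
      = ∑ n ∈ range (d + 1), ‖p.coeff n‖ ^ 2 / ((n : ℝ) + 1) :=
        sum_congr rfl fun n hn ↦ by rw [hcoeff n hn]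
    _ ≤ circleAverage (fun z ↦ ‖p.eval z‖) 0 1 ^ 2 :=
        sum_norm_coeff_sq_div_le_circleAverage_sq p (d + 1)
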